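/- Let m, n ∈ ℕ, let k < 2^m have base-2 digits k_1, …, k_m (least significant first), and let φ : (Fin n → Bool) → Bool be any Boolean predicate. Then the model count of the predicate on pairs (y, x) ∈ (Fin m → Bool) × (Fin n → Bool) given by H^k_m(y) ∧ φ(x) equals k · #(φ). That is, conjoining the gadget H^k_m over a disjoint set of fresh variables multiplies the model count by k. -/

import Mathlib

/-- The recursive gadget `H^k_i`: `H^k_0(y) = false` and
`H^k_{i+1}(y) = y_{i+1} ∨ H^k_i(y)` if the `(i+1)`-st base-2 digit of `k`
(least significant first, i.e. `Nat.testBit k i`) is `1`, and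
`H^k_{i+1}(y) = y_{i+1} ∧ H^k_i(y)` otherwise.  Bits are zero-indexed here. -/
def Hgadget (k : ℕ) (y : ℕ → Bool) : ℕ → Bool
  | 0 => false
  | i + 1 => if Nat.testBit k i then y i || Hgadget k y i else y i && Hgadget k y i

/-!
The recursion of `Hgadget` is the recursion of carries in binary addition: the carry out of a
position is the majority of the two digits and the incoming carry, which for a fixed digit of `k`
equal to `1` (or `0`) is the disjunction (or conjunction) of the other two. Hence `H^k_m(y)` is the
carry-out of adding `k mod 2^m` to the `m`-bit number with digits `y`, and exactly `k mod 2^m` of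
the numbers below `2^m` overflow.
-/

theorem Hgadget_testBit_iff (k a m : ℕ) :
    Hgadget k a.testBit m = true ↔ 2 ^ m ≤ a % 2 ^ m + k % 2 ^ m := by
  induction m with
  | zero => simp [Hgadget, Nat.mod_one]
  | succ m ih =>
    have mod_two_pow_succ (b : ℕ) :
        b % 2 ^ (m + 1) = b % 2 ^ m + 2 ^ m * (b.testBit m).toNat := by
      rw [Nat.mod_pow_succ, Nat.toNat_testBit]
    have ha : a % 2 ^ m < 2 ^ m := Nat.mod_lt _ (Nat.two_pow_pos m)
    have hk : k % 2 ^ m < 2 ^ m := Nat.mod_lt _ (Nat.two_pow_pos m)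
    rw [mod_two_pow_succ, mod_two_pow_succ, pow_succ]
    cases k_bit : k.testBit m <;> cases a_bit : a.testBit m <;>
      simp only [Hgadget, k_bit, a_bit, ih, Bool.false_eq_true, if_true, if_false, Bool.true_or,
        Bool.false_or, Bool.true_and, Bool.false_and, Bool.toNat_true, Bool.toNat_false,
        true_iff, false_iff] <;>
      omega

theorem card_filter_ofBits (m : ℕ) (p : ℕ → Prop) [DecidablePred p] :
    (Finset.univ.filter fun y : Fin m → Bool => p (Nat.ofBits y)).card =
      ((Finset.range (2 ^ m)).filter p).card := by
  refine Finset.card_nbij' Nat.ofBits (fun a i => a.testBit i) ?_ ?_ ?_ ?_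
  · intro y hy
    simpa [Nat.ofBits_lt_two_pow] using hy
  · intro a ha
    obtain ⟨ha_lt, hpa⟩ := Finset.mem_filter.mp ha
    simpa [Nat.ofBits_testBit, Nat.mod_eq_of_lt (Finset.mem_range.mp ha_lt)] using hpa
  · intro y _
    ext i
    simp
  · intro a ha
    simp_all [Nat.ofBits_testBit, Nat.mod_eq_of_lt]

theorem card_filter_range_le_add {c N : ℕ} (hc : c ≤ N) :
    ((Finset.range N).filter fun a => N ≤ a + c).card = c := by
  have overflow : ((Finset.range N).filter fun a => N ≤ a + c) = Finset.Ico (N - c) N := by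
    ext a
    simp only [Finset.mem_filter, Finset.mem_range, Finset.mem_Ico]
    omega
  rw [overflow, Nat.card_Ico, Nat.sub_sub_self hc]

theorem Hgadget_modelCount (m k : ℕ) :
    (Finset.univ.filter fun y : Fin m → Bool =>
        Hgadget k (fun i => if h : i < m then y ⟨i, h⟩ else false) m = true).card =
      k % 2 ^ m := by
  calc
    _ = (Finset.univ.filter fun y : Fin m → Bool =>
          2 ^ m ≤ Nat.ofBits y + k % 2 ^ m).card := by
      simp only [← Nat.testBit_ofBits, Hgadget_testBit_iff,
        Nat.mod_eq_of_lt (Nat.ofBits_lt_two_pow _)]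
    _ = ((Finset.range (2 ^ m)).filter fun a => 2 ^ m ≤ a + k % 2 ^ m).card :=
      card_filter_ofBits m fun a => 2 ^ m ≤ a + k % 2 ^ m
    _ = k % 2 ^ m := card_filter_range_le_add (Nat.mod_lt k (Nat.two_pow_pos m)).le

theorem Hgadget_conj_modelCount_general {α : Type*} [Fintype α] (m k : ℕ) (p : α → Prop)
    [DecidablePred p] :
    (Finset.univ.filter fun q : (Fin m → Bool) × α =>
        Hgadget k (fun i => if h : i < m then q.1 ⟨i, h⟩ else false) m = true ∧ p q.2).card =
      k % 2 ^ m * (Finset.univ.filter p).card := by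
  rw [← Finset.univ_product_univ, Finset.filter_product (fun y : Fin m → Bool =>
    Hgadget k (fun i => if h : i < m then y ⟨i, h⟩ else false) m = true) p,
    Finset.card_product, Hgadget_modelCount]

/-- Conjoining the gadget `H^k_m` over fresh variables `y` multiplies the model count of
any predicate `φ` by `k`: the number of pairs `(y, x)` with `H^k_m(y) ∧ φ(x)` is `k · #(φ)`. -/
theorem Hgadget_conj_modelCount (m n k : ℕ) (hk : k < 2 ^ m)
    (φ : (Fin n → Bool) → Bool) :
    (Finset.univ.filter fun p : (Fin m → Bool) × (Fin n → Bool) =>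
        Hgadget k (fun i => if h : i < m then p.1 ⟨i, h⟩ else false) m = true ∧
          φ p.2 = true).card =
      k * (Finset.univ.filter fun x : Fin n → Bool => φ x = true).card := by
  simpa only [Nat.mod_eq_of_lt hk] using
    Hgadget_conj_modelCount_general m k fun x => φ x = true
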